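/- For each k ≥ 1, the set of IE-tuples of length k of the system (X,G) is equal to the closure in X^k of the union, over all G-invariant Borel probability measures μ on X, of the sets IE^μ_k(X) of μ-IE-tuples of length k. -/

import Mathlib

open MeasureTheory Set
open scoped Classical ENNReal

/-- `F` is a nonempty `(K,δ)`-invariant finite subset of the group `G`. -/
def FolnerInv {G : Type*} [Group G] (K : Finset G) (δ : ℝ) (F : Finset G) : Prop :=
  F.Nonempty ∧
    (1 - δ) * (F.card : ℝ) ≤ (((F : Set G)) ∩ {s : G | ∀ g ∈ K, g * s ∈ F}).ncard

/-- The Følner characterisation of amenability for a discrete group `G`. -/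
def FolnerAmenable (G : Type*) [Group G] : Prop :=
  ∀ (K : Finset G) (δ : ℝ), 0 < δ → ∃ F : Finset G, FolnerInv K δ F

/-- The limit supremum of `ψ F / |F|` as `F` becomes more and more invariant. -/
noncomputable def invLimsup {G : Type*} [Group G] (ψ : Finset G → ℝ) : ℝ :=
  ⨅ (K : Finset G) (δ : {d : ℝ // 0 < d}),
    sSup ((fun F : Finset G => ψ F / (F.card : ℝ)) '' {F : Finset G | FolnerInv K δ.1 F})

/-- The limit infimum of `ψ F / |F|` as `F` becomes more and more invariant. -/
noncomputable def invLiminf {G : Type*} [Group G] (ψ : Finset G → ℝ) : ℝ :=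
  ⨆ (K : Finset G) (δ : {d : ℝ // 0 < d}),
    sInf ((fun F : Finset G => ψ F / (F.card : ℝ)) '' {F : Finset G | FolnerInv K δ.1 F})

/-- `J ⊆ G` is an independence set for the tuple `A` of subsets of `X` relative to the
map `D : G → Set X`. -/
def IndepRel {G X : Type*} [Group G] [MulAction G X] {k : ℕ} (A : Fin k → Set X)
    (D : G → Set X) (J : Set G) : Prop :=
  ∀ F : Finset G, (F : Set G) ⊆ J → F.Nonempty → ∀ σ : G → Fin k,
    (⋂ s ∈ F, (D s ∩ (fun x => s • x) ⁻¹' A (σ s))).Nonempty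

/-- `J ⊆ G` is an independence set for the tuple `A` relative to the subset `D ⊆ X`. -/
def IndepSet {G X : Type*} [Group G] [MulAction G X] {k : ℕ} (A : Fin k → Set X)
    (D : Set X) (J : Set G) : Prop :=
  IndepRel A (fun _ => D) J

/-- The maximum of `|F ∩ J|` over independence sets `J` for `A` relative to `D`. -/
noncomputable def maxIndep {G X : Type*} [Group G] [MulAction G X] {k : ℕ}
    (A : Fin k → Set X) (D : G → Set X) (F : Finset G) : ℕ :=
  sSup {m : ℕ | ∃ J : Set G, IndepRel A D J ∧ m = (((F : Set G)) ∩ J).ncard}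

/-- `φ_{A,δ}(F)`: the minimum over Borel sets `D` with `μ(D) ≥ 1 - δ` of the maximum
of `|F ∩ J|` over independence sets `J` for `A` relative to `D`. -/
noncomputable def phiConst {G X : Type*} [Group G] [MulAction G X] [MeasurableSpace X]
    (μ : Measure X) {k : ℕ} (A : Fin k → Set X) (δ : ℝ) (F : Finset G) : ℕ :=
  sInf {m : ℕ | ∃ D : Set X, MeasurableSet D ∧ 1 - δ ≤ (μ D).toReal ∧
    m = maxIndep A (fun _ : G => D) F}

/-- `φ'_{A,δ}(F)`: as `phiConst` but with maps `D : G → Set X` with `μ(D s) ≥ 1 - δ`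
for all `s`. -/
noncomputable def phiMap {G X : Type*} [Group G] [MulAction G X] [MeasurableSpace X]
    (μ : Measure X) {k : ℕ} (A : Fin k → Set X) (δ : ℝ) (F : Finset G) : ℕ :=
  sInf {m : ℕ | ∃ D : G → Set X, (∀ s, MeasurableSet (D s)) ∧
    (∀ s, 1 - δ ≤ (μ (D s)).toReal) ∧ m = maxIndep A D F}

/-- The upper `μ`-independence density `Ī_μ(A)` of the tuple `A`. -/
noncomputable def upperIndepDens (G : Type*) {X : Type*} [Group G] [MulAction G X]
    [MeasurableSpace X] (μ : Measure X) {k : ℕ} (A : Fin k → Set X) : ℝ :=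
  ⨆ δ : {d : ℝ // 0 < d}, invLimsup (fun F : Finset G => (phiConst μ A δ.1 F : ℝ))

/-- The lower `μ`-independence density `I̲_μ(A)` of the tuple `A`. -/
noncomputable def lowerIndepDens (G : Type*) {X : Type*} [Group G] [MulAction G X]
    [MeasurableSpace X] (μ : Measure X) {k : ℕ} (A : Fin k → Set X) : ℝ :=
  ⨆ δ : {d : ℝ // 0 < d}, invLiminf (fun F : Finset G => (phiConst μ A δ.1 F : ℝ))

/-- The measure `μ` is invariant under the action of `G`. -/
def InvariantMeasure (G : Type*) {X : Type*} [Group G] [MulAction G X] [MeasurableSpace X]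
    (μ : Measure X) : Prop :=
  ∀ (s : G) (B : Set X), MeasurableSet B → μ ((fun x => s • x) ⁻¹' B) = μ B

/-- The entropy `H_μ(𝒫^F)` of the join `⋁_{s ∈ F} s⁻¹𝒫` of the finite partition `P`. -/
noncomputable def HJoin {G X : Type*} [Group G] [MulAction G X] [MeasurableSpace X]
    (μ : Measure X) {k : ℕ} (P : Fin k → Set X) (F : Finset G) : ℝ :=
  ∑ f : ↥F → Fin k,
    Real.negMulLog (μ (⋂ s : ↥F, (fun x => (s : G) • x) ⁻¹' P (f s))).toReal

/-- `P` is a finite measurable partition of `X` (members may be empty). -/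
def IsMeasPartition {X : Type*} [MeasurableSpace X] {k : ℕ} (P : Fin k → Set X) : Prop :=
  (∀ i, MeasurableSet (P i)) ∧ (Pairwise fun i j => Disjoint (P i) (P j)) ∧
    (⋃ i, P i) = Set.univ

/-- `x` is a (topological) IE-tuple for the action of `G` on `X`. -/
def IsIETuple (G : Type*) {X : Type*} [Group G] [TopologicalSpace X] [MulAction G X]
    {k : ℕ} (x : Fin k → X) : Prop :=
  ∀ U : Fin k → Set X, (∀ i, U i ∈ nhds (x i)) →
    ∃ d : ℝ, 0 < d ∧ ∀ (K : Finset G) (δ : ℝ), 0 < δ →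
      ∃ (F : Finset G) (J : Set G), FolnerInv K δ F ∧ IndepSet U (Set.univ : Set X) J ∧
        d * (F.card : ℝ) ≤ (((F : Set G)) ∩ J).ncard

/-- `x` is a `μ`-IE-tuple. -/
def IsMuIETuple (G : Type*) {X : Type*} [Group G] [TopologicalSpace X] [MulAction G X]
    [MeasurableSpace X] (μ : Measure X) {k : ℕ} (x : Fin k → X) : Prop :=
  ∀ U : Fin k → Set X, (∀ i, U i ∈ nhds (x i)) → 0 < upperIndepDens G μ U

/-- A set `S` of words shatters the set `I` of coordinates if every word agrees on `I` with some
member of `S`. -/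
def Shatters {ι κ : Type*} (S : Finset (ι → κ)) (I : Finset ι) : Prop :=
  ∀ σ : ι → κ, ∃ τ ∈ S, ∀ s ∈ I, τ s = σ s

lemma card_filter_le_pred_mul_add {k : ℕ} (hk : 1 ≤ k) (p : Fin k → Prop)
    [DecidablePred p] [Decidable (∃ a, p a)] [Decidable (∀ a, p a)] :
    ((Finset.univ.filter p).card : ℝ) ≤
      (k - 1 : ℝ) * (if ∃ a, p a then 1 else 0) + (if ∀ a, p a then 1 else 0) := by
  by_cases h : ∀ a, p a
  · have : ∃ a, p a := ⟨⟨0, hk⟩, h _⟩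
    rw [if_pos this, if_pos h, Finset.filter_true_of_mem fun a _ => h a]
    simp
  · by_cases h' : ∃ a, p a
    · rw [if_pos h', if_neg h]
      have : (Finset.univ.filter p).card < k := by
        push Not at h
        obtain ⟨a, ha⟩ := h
        calc _ < (Finset.univ : Finset (Fin k)).card :=
              Finset.card_lt_card (Finset.filter_ssubset.2 ⟨a, Finset.mem_univ _, ha⟩)
          _ = k := by simp
      have h2 : ((Finset.univ.filter p).card : ℝ) + 1 ≤ k := by exact_mod_cast this
      linarith
    · rw [if_neg h', if_neg h]
      push Not at h'
      simp [h']

/-- A quantitative Sauer–Shelah lemma for words over a `k`-letter alphabet. -/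
lemma card_le_of_shatters_card_le {k : ℕ} (hk : 1 ≤ k) {t : ℝ} (ht : 0 < t) (ht1 : t ≤ 1) :
    ∀ (n m : ℕ) (S : Finset (Fin n → Fin k)), (∀ I, Shatters S I → I.card ≤ m) →
      (S.card : ℝ) ≤ (k - 1 + t) ^ n * t⁻¹ ^ m := by
  have hk' : (1 : ℝ) ≤ k := by exact_mod_cast hk
  have hti : 1 ≤ t⁻¹ := (one_le_inv₀ ht).2 ht1
  intro n
  induction n with
  | zero =>
    intro m S _
    have : S.card ≤ 1 := Finset.card_le_one.2 fun a _ b _ => Subsingleton.elim a b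
    have h1 : (S.card : ℝ) ≤ 1 := by exact_mod_cast this
    simpa using h1.trans (one_le_pow₀ hti)
  | succ n ih =>
    intro m S hS
    set A : Finset (Fin n → Fin k) := Finset.univ.filter fun y => ∃ a, Fin.cons a y ∈ S with hA
    set B : Finset (Fin n → Fin k) := Finset.univ.filter fun y => ∀ a, Fin.cons a y ∈ S with hB
    have hcard : (S.card : ℝ) ≤ (k - 1) * A.card + B.card := by
      have h1 : S.card = ∑ y : Fin n → Fin k,
          (Finset.univ.filter fun a : Fin k => Fin.cons a y ∈ S).card := by
        rw [Finset.card_eq_sum_card_fiberwise (f := Fin.tail) (t := Finset.univ)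
          (fun _ _ => by simp)]
        refine Finset.sum_congr rfl fun y _ => ?_
        refine (Finset.card_bij (fun a _ => Fin.cons a y) ?_ ?_ ?_).symm
        · intro a ha
          simpa using ha
        · intro a _ b _ h
          exact (Fin.cons_inj.1 h).1
        · intro σ hσ
          simp only [Finset.mem_filter] at hσ
          refine ⟨σ 0, ?_, ?_⟩
          · simp [← hσ.2, hσ.1]
          · simp [← hσ.2]
      rw [h1]
      push_cast
      calc _ ≤ ∑ y : Fin n → Fin k, ((k - 1 : ℝ) * (if ∃ a, Fin.cons a y ∈ S then 1 else 0) +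
              (if ∀ a, Fin.cons a y ∈ S then 1 else 0)) :=
            Finset.sum_le_sum fun y _ => card_filter_le_pred_mul_add hk _
        _ = _ := by
          rw [Finset.sum_add_distrib, ← Finset.mul_sum]
          simp [hA, hB]
    have hAs : ∀ I, Shatters A I → I.card ≤ m := by
      intro I hI
      have : Shatters S (I.map (Fin.succEmb n)) := by
        intro σ
        obtain ⟨y, hy, hyI⟩ := hI (Fin.tail σ)
        obtain ⟨a, ha⟩ := (Finset.mem_filter.1 hy).2
        refine ⟨_, ha, ?_⟩
        intro s hs
        obtain ⟨i, hi, rfl⟩ := Finset.mem_map.1 hs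
        simpa [Fin.tail] using hyI i hi
      simpa using hS _ this
    have hBs : ∀ I, Shatters B I → I.card + 1 ≤ m := by
      intro I hI
      have : Shatters S (insert 0 (I.map (Fin.succEmb n))) := by
        intro σ
        obtain ⟨y, hy, hyI⟩ := hI (Fin.tail σ)
        refine ⟨_, (Finset.mem_filter.1 hy).2 (σ 0), ?_⟩
        intro s hs
        rcases Finset.mem_insert.1 hs with rfl | hs
        · simp
        · obtain ⟨i, hi, rfl⟩ := Finset.mem_map.1 hs
          simpa [Fin.tail] using hyI i hi
      have h := hS _ this
      rwa [Finset.card_insert_of_notMem (by simp [Fin.succ_ne_zero]), Finset.card_map] at h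
    have hA' := ih m A hAs
    have hq : 0 ≤ (k - 1 + t) ^ n := pow_nonneg (by linarith) _
    have hB' : (B.card : ℝ) ≤ (k - 1 + t) ^ n * t⁻¹ ^ m * t := by
      rcases m with _ | m
      · have : B = ∅ := by
          by_contra hne
          obtain ⟨y, hy⟩ := Finset.nonempty_iff_ne_empty.2 hne
          have := hBs ∅ (fun σ => ⟨y, hy, by simp⟩)
          omega
        rw [this]
        simp
        positivity
      · have := ih m B fun I hI => by have := hBs I hI; omega
        refine this.trans (le_of_eq ?_)
        rw [pow_succ t⁻¹]
        field_simp
    calc (S.card : ℝ) ≤ (k - 1) * A.card + B.card := hcard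
      _ ≤ (k - 1) * ((k - 1 + t) ^ n * t⁻¹ ^ m) + (k - 1 + t) ^ n * t⁻¹ ^ m * t := by
        gcongr
      _ = _ := by ring

/-- An exponentially large set of words, of rate `θ > k - 1`, shatters a positive proportion of the
coordinates. -/
lemma exists_shatters_fin {k : ℕ} (hk : 1 ≤ k) {θ : ℝ} (hθ : (k : ℝ) - 1 < θ) :
    ∃ c : ℝ, 0 < c ∧ ∀ (n : ℕ) (S : Finset (Fin n → Fin k)), θ ^ n ≤ S.card →
      ∃ I, Shatters S I ∧ c * n ≤ I.card := by
  have hk' : (1 : ℝ) ≤ k := by exact_mod_cast hk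
  obtain ⟨t, ht, ht2⟩ : ∃ t : ℝ, 0 < t ∧ t < min (1 / 2) (θ - (k - 1)) :=
    exists_between (lt_min (by norm_num) (by linarith))
  have ht1 : t < 1 / 2 := ht2.trans_le (min_le_left _ _)
  have htθ : k - 1 + t < θ := by linarith [ht2.trans_le (min_le_right _ _)]
  have hq : 0 < k - 1 + t := by linarith
  have hlt : 0 < Real.log t⁻¹ := Real.log_pos (by rw [one_lt_inv₀ ht]; linarith)
  have hlq : 0 < Real.log (θ / (k - 1 + t)) := Real.log_pos (by rw [one_lt_div hq]; exact htθ)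
  refine ⟨Real.log (θ / (k - 1 + t)) / Real.log t⁻¹, by positivity, fun n S hS => ?_⟩
  have hθ0 : 0 < θ := by linarith
  have hne : S.Nonempty := by
    rw [← Finset.card_pos]
    exact_mod_cast (pow_pos hθ0 n).trans_le hS
  obtain ⟨y, hy⟩ := hne
  obtain ⟨I, hI, hmax⟩ := Finset.exists_max_image (Finset.univ.filter fun I => Shatters S I)
    Finset.card ⟨∅, Finset.mem_filter.2 ⟨Finset.mem_univ _, fun σ => ⟨y, hy, by simp⟩⟩⟩
  simp only [Finset.mem_filter, Finset.mem_univ, true_and] at hI hmax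
  refine ⟨I, hI, ?_⟩
  have h := hS.trans (card_le_of_shatters_card_le hk ht (by linarith) n I.card S hmax)
  have h2 : (θ / (k - 1 + t)) ^ n ≤ t⁻¹ ^ I.card := by
    rw [div_pow, div_le_iff₀ (by positivity), mul_comm]
    exact h
  have h3 := Real.log_le_log (pow_pos (div_pos hθ0 hq) n) h2
  rw [Real.log_pow, Real.log_pow] at h3
  rw [div_mul_eq_mul_div, div_le_iff₀ hlt]
  linarith

/-- The version of `exists_shatters_fin` for words indexed by a finite subset of a type. -/
lemma exists_shatters {k : ℕ} (hk : 1 ≤ k) {θ : ℝ} (hθ : (k : ℝ) - 1 < θ) :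
    ∃ c : ℝ, 0 < c ∧ ∀ {G : Type*} (J : Finset G) (S : Finset (J → Fin k)),
      θ ^ J.card ≤ S.card → ∃ I ⊆ J, c * J.card ≤ I.card ∧
        ∀ σ : G → Fin k, ∃ τ ∈ S, ∀ (s : G) (hs : s ∈ J), s ∈ I → τ ⟨s, hs⟩ = σ s := by
  obtain ⟨c, hc, h⟩ := exists_shatters_fin hk hθ
  refine ⟨c, hc, fun {G} J S hS => ?_⟩
  let e : J ≃ Fin J.card := J.equivFin
  let E : (J → Fin k) ≃ (Fin J.card → Fin k) := e.arrowCongr (Equiv.refl _)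
  obtain ⟨I, hI, hcI⟩ := h J.card (S.map E.toEmbedding) (by simpa using hS)
  refine ⟨I.map (e.symm.toEmbedding.trans (Function.Embedding.subtype _)), ?_, by simpa using hcI,
    ?_⟩
  · intro s hs
    obtain ⟨i, -, rfl⟩ := Finset.mem_map.1 hs
    exact (e.symm i).2
  · intro σ
    obtain ⟨τ, hτ, hτI⟩ := hI fun i => σ (e.symm i)
    obtain ⟨ρ, hρ, rfl⟩ := Finset.mem_map.1 hτ
    refine ⟨ρ, hρ, ?_⟩
    intro s hs hsI
    obtain ⟨i, hi, rfl⟩ := Finset.mem_map.1 hsI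
    exact hτI i hi

section Independence

variable {G X : Type*} [Group G] [MulAction G X] {k : ℕ}

lemma IndepSet.of_forall_exists {A : Fin k → Set X} {D : Set X} {I : Finset G}
    (h : ∀ σ : G → Fin k, ∃ x ∈ D, ∀ s ∈ I, s • x ∈ A (σ s)) : IndepSet A D (I : Set G) := by
  intro F hF _ σ
  obtain ⟨x, hx, hxI⟩ := h σ
  exact ⟨x, mem_iInter₂.2 fun s hs => ⟨hx, hxI s (hF hs)⟩⟩

lemma IndepSet.exists_mem {A : Fin k → Set X} {D : Set X} {J : Set G} (h : IndepSet A D J)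
    {I : Finset G} (hI : I.Nonempty) (hIJ : (I : Set G) ⊆ J) (σ : G → Fin k) :
    ∃ x ∈ D, ∀ s ∈ I, s • x ∈ A (σ s) := by
  obtain ⟨x, hx⟩ := h I hIJ hI σ
  have hx' := mem_iInter₂.1 hx
  obtain ⟨s, hs⟩ := hI
  exact ⟨x, (hx' s hs).1, fun t ht => (hx' t ht).2⟩

lemma IndepSet.mono {A B : Fin k → Set X} {D E : Set X} {I J : Set G} (h : IndepSet A D J)
    (hAB : ∀ i, A i ⊆ B i) (hDE : D ⊆ E) (hIJ : I ⊆ J) : IndepSet B E I := by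
  intro F hF hne σ
  obtain ⟨x, hx⟩ := h F (hF.trans hIJ) hne σ
  refine ⟨x, mem_iInter₂.2 fun s hs => ?_⟩
  have := mem_iInter₂.1 hx s hs
  exact ⟨hDE this.1, hAB _ this.2⟩

/-- An independence set for a tuple one of whose members is a union of two sets contains an
independence set of proportional size for one of the two refined tuples. -/
lemma exists_indepSet_of_union (hk : 1 ≤ k) :
    ∃ c : ℝ, 0 < c ∧ ∀ (A : Fin k → Set X) (i : Fin k) (B C D : Set X) (J : Finset G),
      IndepSet (Function.update A i (B ∪ C)) D (J : Set G) →
        ∃ I ⊆ J, c * J.card ≤ I.card ∧ (IndepSet (Function.update A i B) D (I : Set G) ∨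
          IndepSet (Function.update A i C) D (I : Set G)) := by
  have hk' : (1 : ℝ) ≤ k := by exact_mod_cast hk
  obtain ⟨c, hc, hsh⟩ := exists_shatters hk (θ := k - 1 / 2) (by linarith)
  refine ⟨c / 2, by positivity, fun A i B C D J hJ => ?_⟩
  rcases J.eq_empty_or_nonempty with rfl | hne
  · refine ⟨∅, subset_rfl, by simp, Or.inl ?_⟩
    intro F hF hFne
    simp_all
  let A' : Bool → Fin k → Set X := fun b => Function.update A i (bif b then B else C)
  let S : (J → Bool) → Finset (J → Fin k) := fun r =>
    Finset.univ.filter fun σ => ∃ x ∈ D, ∀ s : J, (s : G) • x ∈ A' (r s) (σ s)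
  have hcount : ∀ σ : J → Fin k, ∏ s : J, (if σ s = i then 1 else 2) ≤
      (Finset.univ.filter fun r => σ ∈ S r).card := by
    intro σ
    obtain ⟨x, hxD, hx⟩ := hJ.exists_mem hne subset_rfl
      (fun s => if h : s ∈ J then σ ⟨s, h⟩ else ⟨0, hk⟩)
    have hx' : ∀ s : J, (s : G) • x ∈ Function.update A i (B ∪ C) (σ s) := by
      intro s
      simpa using hx s s.2
    let R : Finset (J → Bool) := Fintype.piFinset fun s =>
      if σ s = i then {decide ((s : G) • x ∈ B)} else Finset.univ
    have hR : R.card = ∏ s : J, (if σ s = i then 1 else 2) := by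
      rw [Fintype.card_piFinset]
      refine Finset.prod_congr rfl fun s _ => ?_
      split_ifs <;> simp
    rw [← hR]
    refine Finset.card_le_card fun r hr => ?_
    simp only [S, Finset.mem_filter, Finset.mem_univ, true_and]
    refine ⟨x, hxD, fun s => ?_⟩
    have hrs := Fintype.mem_piFinset.1 hr s
    have hxs := hx' s
    by_cases hs : σ s = i
    · rw [if_pos hs, Finset.mem_singleton] at hrs
      rw [hs, Function.update_self] at hxs
      simp only [A', hs, Function.update_self, hrs]
      by_cases hB : (s : G) • x ∈ B
      · simp [hB]
      · simpa [hB] using hxs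
    · simpa [A', Function.update_of_ne hs] using hxs
  have hsum : ∑ r : J → Bool, (S r).card = ∑ σ : J → Fin k,
      (Finset.univ.filter fun r => σ ∈ S r).card := by
    have := Finset.sum_card_bipartiteAbove_eq_sum_card_bipartiteBelow
      (s := (Finset.univ : Finset (J → Bool))) (t := (Finset.univ : Finset (J → Fin k)))
      (fun r σ => σ ∈ S r)
    simpa [Finset.bipartiteAbove, Finset.bipartiteBelow] using this
  have htot : (2 * k - 1 : ℝ) ^ J.card ≤ ∑ r : J → Bool, ((S r).card : ℝ) := by
    have h1 : ∑ σ : J → Fin k, ∏ s : J, (if σ s = i then (1 : ℝ) else 2) =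
        (2 * k - 1 : ℝ) ^ J.card := by
      have h := Finset.sum_prod_piFinset (Finset.univ : Finset (Fin k))
        (fun (_ : J) a => if a = i then (1 : ℝ) else 2)
      rw [Fintype.piFinset_univ] at h
      have h' : ∑ a : Fin k, (if a = i then (1 : ℝ) else 2) = 2 * k - 1 := by
        rw [← Finset.add_sum_erase _ _ (Finset.mem_univ i),
          Finset.sum_congr rfl fun a ha => if_neg (Finset.ne_of_mem_erase ha)]
        simp only [if_true, Finset.sum_const, Finset.card_erase_of_mem (Finset.mem_univ i),
          Finset.card_univ, Fintype.card_fin, nsmul_eq_mul]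
        push_cast [Nat.cast_sub hk]
        ring
      rw [h]
      simp [h']
    rw [← h1]
    have h2 : ((∑ r : J → Bool, (S r).card : ℕ) : ℝ) = _ := congrArg Nat.cast hsum
    push_cast at h2
    rw [h2]
    refine Finset.sum_le_sum fun σ _ => ?_
    exact_mod_cast hcount σ
  obtain ⟨r, hr⟩ : ∃ r : J → Bool, (k - 1 / 2 : ℝ) ^ J.card ≤ (S r).card := by
    by_contra! hlt
    have h1 : ∑ r : J → Bool, ((S r).card : ℝ) < ∑ r : J → Bool, (k - 1 / 2 : ℝ) ^ J.card :=
      Finset.sum_lt_sum_of_nonempty Finset.univ_nonempty fun r _ => hlt r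
    have h2 : ∑ r : J → Bool, (k - 1 / 2 : ℝ) ^ J.card = (2 * k - 1 : ℝ) ^ J.card := by
      simp only [Finset.sum_const, Finset.card_univ, Fintype.card_fun, Fintype.card_bool,
        Fintype.card_coe, nsmul_eq_mul]
      push_cast
      rw [← mul_pow]
      congr 1
      ring
    linarith
  obtain ⟨I, hIJ, hcI, hI⟩ := hsh J (S r) hr
  let I' : Bool → Finset G := fun b => I.filter fun s => ∃ h : s ∈ J, r ⟨s, h⟩ = b
  have hindep : ∀ b, IndepSet (A' b) D (I' b : Set G) := by
    intro b
    refine IndepSet.of_forall_exists fun σ => ?_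
    obtain ⟨τ, hτ, hτI⟩ := hI σ
    obtain ⟨x, hxD, hx⟩ := (Finset.mem_filter.1 hτ).2
    refine ⟨x, hxD, fun s hs => ?_⟩
    obtain ⟨hsI, hsJ, hrs⟩ := Finset.mem_filter.1 hs
    have := hx ⟨s, hsJ⟩
    rwa [hrs, hτI s hsJ hsI] at this
  have hcardI : I.card ≤ (I' true).card + (I' false).card := by
    refine (Finset.card_le_card fun s hs => ?_).trans (Finset.card_union_le _ _)
    cases hrs : r ⟨s, hIJ hs⟩
    · exact Finset.mem_union_right _ (Finset.mem_filter.2 ⟨hs, hIJ hs, hrs⟩)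
    · exact Finset.mem_union_left _ (Finset.mem_filter.2 ⟨hs, hIJ hs, hrs⟩)
  have hcardI' : (I.card : ℝ) ≤ (I' true).card + (I' false).card := by exact_mod_cast hcardI
  have hsub : ∀ b, I' b ⊆ J := fun b => (Finset.filter_subset _ _).trans hIJ
  rcases le_total (I' true).card (I' false).card with hle | hle
  · have : ((I' true).card : ℝ) ≤ (I' false).card := by exact_mod_cast hle
    exact ⟨I' false, hsub _, by linarith, Or.inr (hindep false)⟩
  · have : ((I' false).card : ℝ) ≤ (I' true).card := by exact_mod_cast hle
    exact ⟨I' true, hsub _, by linarith, Or.inl (hindep true)⟩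

lemma FolnerInv.mono {K L : Finset G} {δ ε : ℝ} {F : Finset G} (h : FolnerInv L ε F)
    (hKL : K ⊆ L) (hδ : ε ≤ δ) : FolnerInv K δ F := by
  refine ⟨h.1, le_trans ?_ (h.2.trans ?_)⟩
  · gcongr
  · exact_mod_cast Set.ncard_le_ncard
      (inter_subset_inter_right _ fun s (hs : ∀ g ∈ L, g * s ∈ F) g hg => hs g (hKL hg))
      (F.finite_toSet.inter_of_left _)

lemma bddAbove_indep_card (A : Fin k → Set X) (D : G → Set X) (F : Finset G) :
    BddAbove {m : ℕ | ∃ J : Set G, IndepRel A D J ∧ m = ((F : Set G) ∩ J).ncard} := by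
  refine ⟨F.card, ?_⟩
  rintro m ⟨J, -, rfl⟩
  rw [← Set.ncard_coe_finset]
  exact Set.ncard_le_ncard inter_subset_left F.finite_toSet

lemma exists_indepSet_card_eq_maxIndep (A : Fin k → Set X) (D : Set X) (F : Finset G) :
    ∃ I ⊆ F, IndepSet A D (I : Set G) ∧ I.card = maxIndep A (fun _ : G => D) F := by
  obtain ⟨J, hJ, hm⟩ := Nat.sSup_mem (s := {m : ℕ | ∃ J : Set G,
    IndepRel A (fun _ => D) J ∧ m = ((F : Set G) ∩ J).ncard})
    ⟨_, ∅, fun E hE hne => by simp_all, rfl⟩ (bddAbove_indep_card A _ F)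
  have hco : ((F.filter fun s => s ∈ J : Finset G) : Set G) = (F : Set G) ∩ J := by
    ext; simp
  refine ⟨F.filter fun s => s ∈ J, Finset.filter_subset _ _, ?_, ?_⟩
  · exact IndepSet.mono hJ (fun _ => subset_rfl) subset_rfl (by rw [hco]; exact inter_subset_right)
  · rw [maxIndep, hm, ← hco, Set.ncard_coe_finset]

lemma card_le_maxIndep {A : Fin k → Set X} {D : Set X} {F I : Finset G} (hIF : I ⊆ F)
    (hI : IndepSet A D (I : Set G)) : I.card ≤ maxIndep A (fun _ : G => D) F := by
  refine le_csSup (bddAbove_indep_card A _ F) ⟨I, hI, ?_⟩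
  rw [inter_eq_right.2 (by exact_mod_cast hIF), Set.ncard_coe_finset]

variable [MeasurableSpace X]

/-- The tuple `A` has `μ`-independence of positive density along arbitrarily invariant sets,
uniformly over all sets of measure close to one. -/
def HasPosIndepDens (G : Type*) {X : Type*} [Group G] [MulAction G X] [MeasurableSpace X]
    (μ : Measure X) {k : ℕ} (A : Fin k → Set X) : Prop :=
  ∃ δ : ℝ, 0 < δ ∧ ∃ c : ℝ, 0 < c ∧ ∀ (K : Finset G) (ε : ℝ), 0 < ε →
    ∃ F : Finset G, FolnerInv K ε F ∧ ∀ D : Set X, MeasurableSet D → 1 - δ ≤ (μ D).toReal →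
      ∃ I ⊆ F, IndepSet A D (I : Set G) ∧ c * F.card ≤ I.card

lemma phiConst_le_maxIndep {μ : Measure X} (A : Fin k → Set X) {δ : ℝ} (F : Finset G) {D : Set X}
    (hD : MeasurableSet D) (hμD : 1 - δ ≤ (μ D).toReal) :
    phiConst μ A δ F ≤ maxIndep A (fun _ : G => D) F :=
  Nat.sInf_le ⟨D, hD, hμD, rfl⟩

lemma phiConst_le_card (μ : Measure X) [IsProbabilityMeasure μ] (A : Fin k → Set X) {δ : ℝ}
    (hδ : 0 < δ) (F : Finset G) : phiConst μ A δ F ≤ F.card := by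
  obtain ⟨I, hIF, -, hI⟩ := exists_indepSet_card_eq_maxIndep A univ F
  refine (phiConst_le_maxIndep A F MeasurableSet.univ (by simp [hδ.le])).trans ?_
  rw [← hI]
  exact Finset.card_le_card hIF

lemma upperIndepDens_pos_iff (hamen : FolnerAmenable G) (μ : Measure X) [IsProbabilityMeasure μ]
    (A : Fin k → Set X) : 0 < upperIndepDens G μ A ↔ HasPosIndepDens G μ A := by
  set R : ℝ → Finset G → ℝ → Set ℝ := fun δ K ε =>
    (fun F : Finset G => (phiConst μ A δ F : ℝ) / (F.card : ℝ)) '' {F | FolnerInv K ε F} with hR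
  have hbdd : ∀ δ, 0 < δ → ∀ K ε, ∀ v ∈ R δ K ε, 0 ≤ v ∧ v ≤ 1 := by
    rintro δ hδ K ε _ ⟨F, hF, rfl⟩
    refine ⟨by positivity, div_le_one_of_le₀ ?_ (by positivity)⟩
    exact_mod_cast phiConst_le_card μ A hδ F
  have hnonneg : ∀ δ, 0 < δ → ∀ K ε, 0 ≤ sSup (R δ K ε) := fun δ hδ K ε =>
    Real.sSup_nonneg fun v hv => (hbdd δ hδ K ε v hv).1
  have hle : ∀ (δ : {d : ℝ // 0 < d}) (K : Finset G) (ε : ℝ), 0 < ε →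
      invLimsup (fun F : Finset G => (phiConst μ A δ.1 F : ℝ)) ≤ sSup (R δ.1 K ε) := by
    intro δ K ε hε
    refine (ciInf_le ⟨0, ?_⟩ K).trans (ciInf_le ⟨0, ?_⟩ (⟨ε, hε⟩ : {d : ℝ // 0 < d}))
    · rintro _ ⟨K, rfl⟩
      exact Real.iInf_nonneg fun ε => hnonneg δ.1 δ.2 K ε
    · rintro _ ⟨ε, rfl⟩
      exact hnonneg δ.1 δ.2 K ε
  constructor
  · intro h
    have : Nonempty {d : ℝ // 0 < d} := ⟨⟨1, one_pos⟩⟩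
    obtain ⟨δ, hδ⟩ := exists_lt_of_lt_ciSup h
    set v := invLimsup (fun F : Finset G => (phiConst μ A δ.1 F : ℝ)) with hv
    refine ⟨δ.1, δ.2, v / 2, by positivity, fun K ε hε => ?_⟩
    obtain ⟨F₀, hF₀⟩ := hamen K ε hε
    obtain ⟨_, ⟨F, hF, rfl⟩, hlt⟩ := exists_lt_of_lt_csSup (s := R δ.1 K ε) ⟨_, F₀, hF₀, rfl⟩
      (b := v / 2) (by linarith [hle δ K ε hε])
    refine ⟨F, hF, fun D hD hμD => ?_⟩
    obtain ⟨I, hIF, hI, hIc⟩ := exists_indepSet_card_eq_maxIndep A D F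
    refine ⟨I, hIF, hI, ?_⟩
    rw [hIc]
    have hFpos : (0 : ℝ) < F.card := by exact_mod_cast hF.1.card_pos
    refine ((lt_div_iff₀ hFpos).1 hlt).le.trans ?_
    exact_mod_cast phiConst_le_maxIndep A F hD hμD
  · rintro ⟨δ, hδ, c, hc, h⟩
    refine hc.trans_le (le_trans ?_ (le_ciSup (f := fun δ : {d : ℝ // 0 < d} =>
      invLimsup (fun F : Finset G => (phiConst μ A δ.1 F : ℝ))) ⟨1, ?_⟩ ⟨δ, hδ⟩))
    · have : Nonempty {d : ℝ // 0 < d} := ⟨⟨1, one_pos⟩⟩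
      refine le_ciInf fun K => le_ciInf fun ε => ?_
      obtain ⟨F, hF, hD⟩ := h K ε.1 ε.2
      have hFpos : (0 : ℝ) < F.card := by exact_mod_cast hF.1.card_pos
      refine le_trans ?_ (le_csSup ⟨1, fun v hv => (hbdd δ hδ K ε.1 v hv).2⟩ ⟨F, hF, rfl⟩)
      rw [le_div_iff₀ hFpos]
      obtain ⟨D, hDm, hμD, hDe⟩ := Nat.sInf_mem (s := {m : ℕ | ∃ D : Set X, MeasurableSet D ∧
        1 - δ ≤ (μ D).toReal ∧ m = maxIndep A (fun _ : G => D) F})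
        ⟨_, univ, MeasurableSet.univ, by simp [hδ.le], rfl⟩
      obtain ⟨I, hIF, hI, hcI⟩ := hD D hDm hμD
      refine hcI.trans ?_
      have hphi : phiConst μ A δ F = maxIndep A (fun _ : G => D) F := hDe
      simp only [hphi]
      exact_mod_cast card_le_maxIndep hIF hI
    · rintro _ ⟨δ, rfl⟩
      refine (hle δ ∅ 1 one_pos).trans ?_
      exact Real.sSup_le (fun v hv => (hbdd δ.1 δ.2 ∅ 1 v hv).2) zero_le_one

lemma HasPosIndepDens.mono {μ : Measure X} {A B : Fin k → Set X} (h : HasPosIndepDens G μ A)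
    (hAB : ∀ i, A i ⊆ B i) : HasPosIndepDens G μ B := by
  obtain ⟨δ, hδ, c, hc, h⟩ := h
  refine ⟨δ, hδ, c, hc, fun K ε hε => ?_⟩
  obtain ⟨F, hF, hD⟩ := h K ε hε
  refine ⟨F, hF, fun D hDm hμD => ?_⟩
  obtain ⟨I, hIF, hI, hcI⟩ := hD D hDm hμD
  exact ⟨I, hIF, hI.mono hAB subset_rfl subset_rfl, hcI⟩

lemma HasPosIndepDens.nonempty {μ : Measure X} [IsProbabilityMeasure μ] {A : Fin k → Set X}
    (h : HasPosIndepDens G μ A) (i : Fin k) : (A i).Nonempty := by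
  obtain ⟨δ, hδ, c, hc, h⟩ := h
  obtain ⟨F, hF, hD⟩ := h ∅ 1 one_pos
  obtain ⟨I, hIF, hI, hcI⟩ := hD univ MeasurableSet.univ (by simp [hδ.le])
  have hne : I.Nonempty := by
    rw [← Finset.card_pos]
    have : (0 : ℝ) < F.card := by exact_mod_cast hF.1.card_pos
    exact_mod_cast (mul_pos hc this).trans_le hcI
  obtain ⟨x, -, hx⟩ := hI.exists_mem hne subset_rfl fun _ => i
  obtain ⟨s, hs⟩ := hne
  exact ⟨_, hx s hs⟩

/-- Positivity of the `μ`-independence density is partition regular in each entry. -/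
lemma HasPosIndepDens.of_union (hk : 1 ≤ k) {μ : Measure X} [IsProbabilityMeasure μ]
    {A : Fin k → Set X} {i : Fin k} {B C : Set X}
    (h : HasPosIndepDens G μ (Function.update A i (B ∪ C))) :
    HasPosIndepDens G μ (Function.update A i B) ∨ HasPosIndepDens G μ (Function.update A i C) := by
  obtain ⟨d, hd, hsplit⟩ := exists_indepSet_of_union (G := G) (X := X) hk
  obtain ⟨δ, hδ, c, hc, h⟩ := h
  by_contra! hcon
  obtain ⟨hB, hC⟩ := hcon
  simp only [HasPosIndepDens] at hB hC
  push Not at hB hC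
  obtain ⟨K, ε, hε, hB⟩ := hB (δ / 2) (by positivity) (d * c) (by positivity)
  obtain ⟨L, η, hη, hC⟩ := hC (δ / 2) (by positivity) (d * c) (by positivity)
  obtain ⟨F, hF, hD⟩ := h (K ∪ L) (min ε η) (lt_min hε hη)
  obtain ⟨D₁, hD₁, hμD₁, hB⟩ := hB F (hF.mono Finset.subset_union_left (min_le_left _ _))
  obtain ⟨D₂, hD₂, hμD₂, hC⟩ := hC F (hF.mono Finset.subset_union_right (min_le_right _ _))
  have hμ : 1 - δ ≤ (μ (D₁ ∩ D₂)).toReal := by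
    change _ ≤ μ.real _
    change _ ≤ μ.real _ at hμD₁ hμD₂
    have h1 := measureReal_union_add_inter (μ := μ) (s := D₁) hD₂
    have h2 : μ.real (D₁ ∪ D₂) ≤ 1 := measureReal_le_one
    linarith
  obtain ⟨J, hJF, hJ, hcJ⟩ := hD _ (hD₁.inter hD₂) hμ
  obtain ⟨I, hIJ, hdI, hI⟩ := hsplit A i B C _ J hJ
  have hlow : d * c * F.card ≤ I.card := by
    rw [mul_assoc]
    exact (mul_le_mul_of_nonneg_left hcJ hd.le).trans hdI
  rcases hI with hI | hI
  · exact absurd hlow (not_le.2 (hB I (hIJ.trans hJF)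
      (hI.mono (fun _ => subset_rfl) inter_subset_left subset_rfl)))
  · exact absurd hlow (not_le.2 (hC I (hIJ.trans hJF)
      (hI.mono (fun _ => subset_rfl) inter_subset_right subset_rfl)))

/-- Compact tuples of positive `μ`-independence density contain `μ`-IE-tuples. -/
lemma exists_mem_forall_hasPosIndepDens [TopologicalSpace X] (hk : 1 ≤ k) {μ : Measure X}
    [IsProbabilityMeasure μ] {U : Fin k → Set X} (hU : ∀ i, IsCompact (U i))
    (h : HasPosIndepDens G μ U) :
    ∃ x : Fin k → X, (∀ i, x i ∈ U i) ∧
      ∀ V : Fin k → Set X, (∀ i, V i ∈ nhds (x i)) → HasPosIndepDens G μ V := by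
  suffices hs : ∀ s : Finset (Fin k), ∃ x : Fin k → X, (∀ i, x i ∈ U i) ∧
      ∀ V : Fin k → Set X, (∀ i, V i ∈ nhds (x i)) →
        HasPosIndepDens G μ (fun i => if i ∈ s then V i else U i) by
    obtain ⟨x, hx, hV⟩ := hs Finset.univ
    exact ⟨x, hx, fun V h => by simpa using hV V h⟩
  intro s
  induction s using Finset.induction_on with
  | empty =>
    choose x hx using fun i => h.nonempty i
    exact ⟨x, hx, fun V _ => by simpa using h⟩
  | insert j s hj ih =>
    obtain ⟨x, hx, hV⟩ := ih
    by_contra! hcon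
    let A : (Fin k → Set X) → Set X → Fin k → Set X := fun V B =>
      Function.update (fun i => if i ∈ s then V i else U i) j B
    have hA : ∀ {V W B C}, (∀ i, V i ⊆ W i) → B ⊆ C → ∀ i, A V B i ⊆ A W C i := by
      intro V W B C hVW hBC i
      by_cases hij : i = j
      · subst hij
        simpa [A] using hBC
      · by_cases his : i ∈ s <;> simp [A, hij, his, hVW]
    have hsmall : ∃ V : Fin k → Set X, (∀ i, V i ∈ nhds (x i)) ∧
        ¬ HasPosIndepDens G μ (A V (U j)) := by
      refine (hU j).induction_on (p := fun B => ∃ V : Fin k → Set X, (∀ i, V i ∈ nhds (x i)) ∧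
        ¬ HasPosIndepDens G μ (A V B)) ?_ ?_ ?_ ?_
      · refine ⟨fun _ => univ, fun _ => Filter.univ_mem, fun hp => ?_⟩
        simpa [A] using hp.nonempty j
      · rintro B C hBC ⟨V, hVx, hn⟩
        exact ⟨V, hVx, fun hp => hn (hp.mono (hA (fun _ => subset_rfl) hBC))⟩
      · rintro B C ⟨V, hVx, hB⟩ ⟨W, hWx, hC⟩
        refine ⟨fun i => V i ∩ W i, fun i => Filter.inter_mem (hVx i) (hWx i), fun hp => ?_⟩
        rcases hp.of_union hk with hp | hp
        · exact hB (hp.mono (hA (fun _ => inter_subset_left) subset_rfl))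
        · exact hC (hp.mono (hA (fun _ => inter_subset_right) subset_rfl))
      · intro y hy
        obtain ⟨V, hVx, hn⟩ := hcon (Function.update x j y) (fun i => by
          by_cases hij : i = j
          · subst hij; simpa using hy
          · simpa [hij] using hx i)
        refine ⟨V j, mem_nhdsWithin_of_mem_nhds (by simpa using hVx j),
          Function.update V j univ, fun i => ?_, fun hp => hn (hp.mono fun i => ?_)⟩
        · by_cases hij : i = j
          · subst hij; simp
          · simpa [hij] using hVx i
        · by_cases hij : i = j
          · subst hij; simp [A]
          · by_cases his : i ∈ s <;> simp [A, hij, his]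
    obtain ⟨V, hVx, hn⟩ := hsmall
    refine hn ?_
    have : A V (U j) = fun i => if i ∈ s then V i else U i := by
      funext i
      by_cases hij : i = j
      · subst hij; simp [A, hj]
      · simp [A, hij]
    rw [this]
    exact hV V hVx

end Independence

section InvariantMeasures

lemma FolnerInv.abs_sum_mul_left_sub_le {G : Type*} [Group G] {K F : Finset G} {δ M : ℝ}
    (hF : FolnerInv K δ F) {g : G} (hg : g ∈ K) {e : G → ℝ} (he : ∀ t, |e t| ≤ M) :
    |∑ t ∈ F, e (g * t) - ∑ t ∈ F, e t| ≤ 2 * M * (δ * F.card) := by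
  have hM : 0 ≤ M := (abs_nonneg _).trans (he 1)
  set gF : Finset G := F.map (mulLeftEmbedding g) with hgF
  have hsum : ∑ t ∈ F, e (g * t) = ∑ t ∈ gF, e t := by simp [hgF]
  have hcard : ((gF \ F).card : ℝ) ≤ δ * F.card := by
    have hsplit := Finset.card_filter_add_card_filter_not (s := F) (fun t => g * t ∈ F)
    have h1 : (gF \ F).card ≤ (F.filter fun t => ¬ g * t ∈ F).card := by
      have : gF \ F = (F.filter fun t => ¬ g * t ∈ F).map (mulLeftEmbedding g) := by
        ext u
        simp only [hgF, Finset.mem_sdiff, Finset.mem_map, Finset.mem_filter,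
          mulLeftEmbedding_apply]
        constructor
        · rintro ⟨⟨t, ht, rfl⟩, hu⟩
          exact ⟨t, ⟨ht, hu⟩, rfl⟩
        · rintro ⟨t, ⟨ht, hu⟩, rfl⟩
          exact ⟨⟨t, ht, rfl⟩, hu⟩
      rw [this, Finset.card_map]
    have h2 : ((F : Set G) ∩ {s : G | ∀ g ∈ K, g * s ∈ F}).ncard ≤
        (F.filter fun t => g * t ∈ F).card := by
      rw [← Set.ncard_coe_finset]
      refine Set.ncard_le_ncard (fun t ht => ?_) (Finset.finite_toSet _)
      simpa using ⟨ht.1, ht.2 g hg⟩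
    have h3 := hF.2
    have h1' : ((gF \ F).card : ℝ) ≤ (F.filter fun t => ¬ g * t ∈ F).card := by exact_mod_cast h1
    have h2' : (((F : Set G) ∩ {s : G | ∀ g ∈ K, g * s ∈ F}).ncard : ℝ) ≤
        (F.filter fun t => g * t ∈ F).card := by exact_mod_cast h2
    have h4 : ((F.filter fun t => g * t ∈ F).card : ℝ) +
        (F.filter fun t => ¬ g * t ∈ F).card = F.card := by exact_mod_cast hsplit
    linarith
  have hbound : ∀ s : Finset G, |∑ t ∈ s, e t| ≤ s.card * M := fun s =>
    (Finset.abs_sum_le_sum_abs _ _).trans (by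
      simpa using Finset.sum_le_sum fun t (_ : t ∈ s) => he t)
  have hcomm : (F \ gF).card = (gF \ F).card := Finset.card_sdiff_comm (by simp [hgF])
  rw [hsum, ← Finset.sum_sdiff_sub_sum_sdiff]
  refine (abs_sub _ _).trans ?_
  have h1 := hbound (gF \ F)
  have h2 := hbound (F \ gF)
  rw [hcomm] at h2
  nlinarith

variable {Y : Type*} [TopologicalSpace Y] [CompactSpace Y] [T2Space Y]
  [MeasurableSpace Y] [BorelSpace Y]

/-- Riesz representation for normalized positive functionals on a compact space, with invariance. -/
lemma exists_invariant_measure_of_functional {ι : Type*} (T : ι → Y ≃ₜ Y) (Λ : C(Y, ℝ) →ₗ[ℝ] ℝ)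
    (hΛ0 : ∀ f, 0 ≤ f → 0 ≤ Λ f) (hΛ1 : Λ 1 = 1)
    (hΛT : ∀ g (f : C(Y, ℝ)), Λ (f.comp (T g : C(Y, Y))) = Λ f) :
    ∃ ν : Measure Y, IsProbabilityMeasure ν ∧ (∀ g, ν.map (T g) = ν) ∧
      ∀ f : C(Y, ℝ), ∫ y, f y ∂ν = Λ f := by
  let Λ₀ : CompactlySupportedContinuousMap Y ℝ →ₗ[ℝ] ℝ :=
    { toFun := fun f => Λ f.toContinuousMap
      map_add' := fun f g => Λ.map_add f.toContinuousMap g.toContinuousMap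
      map_smul' := fun a f => Λ.map_smul a f.toContinuousMap }
  let Λ' := PositiveLinearMap.mk₀ Λ₀ fun f hf => hΛ0 f.toContinuousMap hf
  let ν := RealRMK.rieszMeasure Λ'
  have hint : ∀ f : C(Y, ℝ), ∫ y, f y ∂ν = Λ f := fun f =>
    RealRMK.integral_rieszMeasure Λ' (CompactlySupportedContinuousMap.continuousMapEquiv f)
  have : ν.Regular := RealRMK.regular_rieszMeasure Λ'
  refine ⟨ν, ⟨?_⟩, fun g => ?_, hint⟩
  · have h := hint 1
    rw [hΛ1] at h
    simp only [ContinuousMap.one_apply, integral_const, smul_eq_mul, mul_one] at h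
    rwa [measureReal_def, ENNReal.toReal_eq_one_iff] at h
  · have : (ν.map (T g)).Regular := Measure.Regular.map (T g)
    refine Measure.ext_of_integral_eq_on_compactlySupported fun f => ?_
    rw [integral_map (T g).continuous.aemeasurable 
      (map_continuous f).aestronglyMeasurable]
    exact (hint (f.toContinuousMap.comp (T g : C(Y, Y)))).trans
      ((hΛT g _).trans (hint f.toContinuousMap).symm)

/-- Averaging states along Følner sets produces invariant probability measures in the limit. -/
lemma exists_invariant_measure_of_averages {G : Type*} [Group G] (T : G → Y ≃ₜ Y)
    (hT : ∀ g h y, T (g * h) y = T g (T h y)) (F : Finset G × ℕ → Finset G)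
    (hF : ∀ i, FolnerInv i.1 (1 / ((i.2 : ℝ) + 1)) (F i))
    (E : Finset G × ℕ → C(Y, ℝ) →ₗ[ℝ] ℝ) (hE0 : ∀ i f, 0 ≤ f → 0 ≤ E i f)
    (hE1 : ∀ i, E i 1 = 1) :
    ∃ ν : Measure Y, IsProbabilityMeasure ν ∧ (∀ g, ν.map (T g) = ν) ∧
      ∀ (f : C(Y, ℝ)) (c : ℝ),
        (∀ i, c ≤ (∑ t ∈ F i, E i (f.comp (T t : C(Y, Y)))) / (F i).card) → c ≤ ∫ y, f y ∂ν := by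
  have hFpos : ∀ i, (0 : ℝ) < (F i).card := fun i => by exact_mod_cast (hF i).1.card_pos
  have hmono : ∀ i f g, f ≤ g → E i f ≤ E i g := fun i f g hfg => by
    have := hE0 i (g - f) (sub_nonneg.2 hfg)
    rw [map_sub] at this
    linarith
  have hEabs : ∀ i (f : C(Y, ℝ)) t, |E i (f.comp (T t : C(Y, Y)))| ≤ ‖f‖ := by
    intro i f t
    have h1 : E i (‖f‖ • 1) = ‖f‖ := by rw [map_smul, hE1, smul_eq_mul, mul_one]
    rw [abs_le]
    constructor
    · rw [← h1, ← map_neg]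
      refine hmono _ _ _ fun y => ?_
      simpa using (abs_le.1 (f.norm_coe_le_norm (T t y))).1
    · conv_rhs => rw [← h1]
      refine hmono _ _ _ fun y => ?_
      simpa using (abs_le.1 (f.norm_coe_le_norm (T t y))).2
  let L : Finset G × ℕ → C(Y, ℝ) → ℝ := fun i f =>
    (∑ t ∈ F i, E i (f.comp (T t : C(Y, Y)))) / (F i).card
  have hLabs : ∀ i f, L i f ∈ Icc (-‖f‖) ‖f‖ := by
    intro i f
    rw [mem_Icc, ← abs_le, abs_div, abs_of_pos (hFpos i), div_le_iff₀ (hFpos i)]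
    refine (Finset.abs_sum_le_sum_abs _ _).trans ?_
    refine (Finset.sum_le_sum fun t _ => hEabs i f t).trans (le_of_eq ?_)
    simp [mul_comm]
  let 𝒰 : Ultrafilter (Finset G × ℕ) := Ultrafilter.of Filter.atTop
  have h𝒰 : (𝒰 : Filter (Finset G × ℕ)) ≤ Filter.atTop := Ultrafilter.of_le _
  have hlim : ∀ f, ∃ l, Filter.Tendsto (fun i => L i f) 𝒰 (nhds l) := by
    intro f
    obtain ⟨l, -, hl⟩ := (isCompact_Icc (a := -‖f‖) (b := ‖f‖)).ultrafilter_le_nhds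
      (𝒰.map fun i => L i f) (Filter.le_principal_iff.2 (Filter.mem_map.2
        (Filter.univ_mem' fun i => hLabs i f)))
    exact ⟨l, hl⟩
  choose Λ hΛ using hlim
  let Λ' : C(Y, ℝ) →ₗ[ℝ] ℝ :=
    { toFun := Λ
      map_add' := fun f g => tendsto_nhds_unique (hΛ (f + g)) (by
        refine ((hΛ f).add (hΛ g)).congr fun i => ?_
        simp only [L, ContinuousMap.add_comp, map_add, Finset.sum_add_distrib, add_div])
      map_smul' := fun a f => tendsto_nhds_unique (hΛ (a • f)) (by
        refine ((hΛ f).const_mul a).congr fun i => ?_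
        simp only [L, ContinuousMap.smul_comp, map_smul, smul_eq_mul, ← Finset.mul_sum,
          mul_div_assoc]) }
  have hge : ∀ f c, (∀ i, c ≤ L i f) → c ≤ Λ f := fun f c hc => ge_of_tendsto' (hΛ f) hc
  obtain ⟨ν, hν, hνT, hint⟩ := exists_invariant_measure_of_functional T Λ'
    (fun f hf => hge f 0 fun i => div_nonneg (Finset.sum_nonneg fun t _ =>
      hE0 i _ fun y => hf (T t y)) (hFpos i).le)
    (tendsto_nhds_unique (hΛ 1) (by
      refine tendsto_const_nhds.congr fun i => ?_
      simp only [L, ContinuousMap.one_comp, hE1, Finset.sum_const, nsmul_eq_mul, mul_one]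
      exact (div_self (hFpos i).ne').symm))
    (fun g f => by
      refine sub_eq_zero.1 (tendsto_nhds_unique
        ((hΛ (f.comp (T g : C(Y, Y)))).sub (hΛ f)) ?_)
      have hbound : ∀ᶠ i in Filter.atTop, |L i (f.comp (T g : C(Y, Y))) - L i f| ≤
          2 * ‖f‖ * (1 / ((i.2 : ℝ) + 1)) := by
        filter_upwards [Filter.eventually_ge_atTop (({g}, 0) : Finset G × ℕ)] with i hi
        have hgi : g ∈ i.1 := hi.1 (Finset.mem_singleton_self g)
        have h := (hF i).abs_sum_mul_left_sub_le hgi (hEabs i f)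
        have hcomp : ∀ t, (f.comp (T g : C(Y, Y))).comp (T t : C(Y, Y)) =
            f.comp (T (g * t) : C(Y, Y)) := fun t => by
          ext y
          simp [hT]
        simp only [L, hcomp]
        rw [← sub_div, abs_div, abs_of_pos (hFpos i), div_le_iff₀ (hFpos i)]
        linarith
      have hzero : Filter.Tendsto (fun i : Finset G × ℕ => 2 * ‖f‖ * (1 / ((i.2 : ℝ) + 1)))
          Filter.atTop (nhds 0) := by
        have h1 : Filter.Tendsto (fun i : Finset G × ℕ => i.2) Filter.atTop Filter.atTop :=
          Filter.tendsto_atTop_atTop.2 fun n => ⟨(∅, n), fun i hi => hi.2⟩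
        simpa using (tendsto_one_div_add_atTop_nhds_zero_nat.comp h1).const_mul (2 * ‖f‖)
      exact (squeeze_zero_norm' hbound hzero).mono_left h𝒰)
  refine ⟨ν, hν, hνT, fun f c hc => ?_⟩
  rw [hint]
  exact hge f c hc

end InvariantMeasures

section JointSpace

variable {G : Type*} {k : ℕ}

/-- The partial labelling which is `τ` on `J` and undefined elsewhere. The value `0` marks
unlabelled elements and `i.succ` the label `i`. -/
noncomputable def labelling (J : Finset G) (τ : G → Fin k) (s : G) : Fin (k + 1) :=
  if s ∈ J then (τ s).succ else 0

lemma labelling_eq_succ_iff {J : Finset G} {τ : G → Fin k} {s : G} {i : Fin k} :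
    labelling J τ s = i.succ ↔ s ∈ J ∧ τ s = i := by
  by_cases h : s ∈ J <;> simp [labelling, h, (Fin.succ_ne_zero i).symm]

/-- The extension of `τ` by a default value. -/
noncomputable def extendLabel (hk : 1 ≤ k) {J : Finset G} (τ : J → Fin k) (s : G) : Fin k :=
  if h : s ∈ J then τ ⟨s, h⟩ else ⟨0, hk⟩

lemma extendLabel_coe (hk : 1 ≤ k) {J : Finset G} (τ : J → Fin k) (s : J) :
    extendLabel hk τ s = τ s := by
  simp [extendLabel]

variable {X : Type*} [Group G] [MulAction G X]

/-- Pairs of a point `x` and a partial labelling `ω` of `G` such that `s • x ∈ U i` whenever `ω`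
gives `s` the label `i`. -/
def JointSpace (G : Type*) {X : Type*} [Group G] [MulAction G X] {k : ℕ} (U : Fin k → Set X) :
    Type _ :=
  {y : X × (G → Fin (k + 1)) // ∀ s i, y.2 s = Fin.succ i → s • y.1 ∈ U i}

namespace JointSpace

variable {U : Fin k → Set X}

/-- The labelled points whose labelling restricted to `F` is `τ` on `J` and undefined elsewhere. -/
def cylinder (U : Fin k → Set X) (F J : Finset G) (τ : G → Fin k) : Set (JointSpace G U) :=
  {y | ∀ s ∈ F, y.1.2 s = labelling J τ s}

variable [TopologicalSpace X]

instance : TopologicalSpace (JointSpace G U) := instTopologicalSpaceSubtype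

instance : MeasurableSpace (JointSpace G U) := borel _

instance : BorelSpace (JointSpace G U) := ⟨rfl⟩

instance [T2Space X] : T2Space (JointSpace G U) :=
  inferInstanceAs (T2Space (Subtype _))

lemma continuous_point : Continuous fun y : JointSpace G U => y.1.1 :=
  continuous_fst.comp continuous_subtype_val

lemma continuous_label (s : G) : Continuous fun y : JointSpace G U => y.1.2 s :=
  (continuous_apply s).comp (continuous_snd.comp continuous_subtype_val)

lemma isClopen_label (s : G) (a : Fin (k + 1)) : IsClopen {y : JointSpace G U | y.1.2 s = a} :=
  (isClopen_discrete {a}).preimage (continuous_label s)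

lemma isClopen_cylinder (F J : Finset G) (τ : G → Fin k) : IsClopen (cylinder U F J τ) := by
  have : cylinder U F J τ = ⋂ s ∈ F, {y : JointSpace G U | y.1.2 s = labelling J τ s} := by
    ext y
    simp [cylinder]
  rw [this]
  exact isClopen_biInter_finset fun s _ => isClopen_label s _

variable [ContinuousConstSMul G X]

lemma compactSpace [CompactSpace X] (hU : ∀ i, IsClosed (U i)) : CompactSpace (JointSpace G U) := by
  refine isCompact_iff_compactSpace.1 (IsClosed.isCompact ?_)
  have : {y : X × (G → Fin (k + 1)) | ∀ s i, y.2 s = Fin.succ i → s • y.1 ∈ U i} =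
      ⋂ (s : G) (i : Fin k), {y | y.2 s = Fin.succ i}ᶜ ∪ {y | s • y.1 ∈ U i} := by
    ext y
    simp [imp_iff_not_or]
  change IsClosed {y : X × (G → Fin (k + 1)) | ∀ s i, y.2 s = Fin.succ i → s • y.1 ∈ U i}
  rw [this]
  refine isClosed_iInter fun s => isClosed_iInter fun i => IsClosed.union ?_ ?_
  · have hcont : Continuous fun y : X × (G → Fin (k + 1)) => y.2 s :=
      (continuous_apply s).comp continuous_snd
    exact ((isOpen_discrete {Fin.succ i}).preimage hcont).isClosed_compl
  · exact (hU i).preimage (continuous_fst.const_smul s)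

/-- The map by which an element of `G` acts on labelled points. -/
def shiftFun (g : G) (y : JointSpace G U) : JointSpace G U :=
  ⟨(g • y.1.1, fun s => y.1.2 (s * g)), fun s i h => by
    rw [smul_smul]
    exact y.2 (s * g) i h⟩

lemma continuous_shiftFun (g : G) : Continuous (shiftFun (U := U) g) :=
  ((continuous_point.const_smul g).prodMk
    (continuous_pi fun s => continuous_label (s * g))).subtype_mk _

/-- The action of `G` on labelled points by homeomorphisms. -/
def shift (g : G) : JointSpace G U ≃ₜ JointSpace G U where
  toFun := shiftFun g
  invFun := shiftFun g⁻¹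
  left_inv y := Subtype.ext (by simp [shiftFun])
  right_inv y := Subtype.ext (by simp [shiftFun])
  continuous_toFun := continuous_shiftFun g
  continuous_invFun := continuous_shiftFun g⁻¹

lemma shift_mul (g h : G) (y : JointSpace G U) : shift (g * h) y = shift g (shift h y) :=
  Subtype.ext (Prod.ext (mul_smul g h y.1.1)
    (funext fun s => congrArg y.1.2 (mul_assoc s g h).symm))

/-- If `U` has independence sets of density at least `d` along arbitrarily invariant sets, then
there is an invariant measure under which labels occur with probability at least `d` and, given
the set of labelled elements, are independent and uniformly distributed. -/
lemma exists_measure [CompactSpace X] [T2Space X] (hk : 1 ≤ k) (hU : ∀ i, IsClosed (U i)) {d : ℝ}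
    (hd : 0 < d) (h : ∀ (K : Finset G) (δ : ℝ), 0 < δ → ∃ (F : Finset G) (J : Set G),
      FolnerInv K δ F ∧ IndepSet U univ J ∧ d * F.card ≤ ((F : Set G) ∩ J).ncard) :
    ∃ ν : Measure (JointSpace G U), IsProbabilityMeasure ν ∧
      (∀ g : G, ν.map (shift g) = ν) ∧ d ≤ ν.real {y | y.1.2 1 = 0}ᶜ ∧
      ∀ (F J : Finset G) (τ τ' : G → Fin k),
        ν.real (cylinder U F J τ) ≤ ν.real (cylinder U F J τ') := by
  have := compactSpace (G := G) hU
  have h' : ∀ i : Finset G × ℕ, ∃ F J : Finset G, FolnerInv i.1 (1 / ((i.2 : ℝ) + 1)) F ∧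
      J ⊆ F ∧ d * F.card ≤ J.card ∧
      ∀ σ : J → Fin k, ∃ x : X, ∀ s ∈ J, s • x ∈ U (extendLabel hk σ s) := by
    intro i
    obtain ⟨F, J, hF, hJ, hc⟩ := h i.1 (1 / ((i.2 : ℝ) + 1)) (by positivity)
    have hco : ((F.filter fun s => s ∈ J : Finset G) : Set G) = (F : Set G) ∩ J := by
      ext; simp
    rw [← hco, Set.ncard_coe_finset] at hc
    refine ⟨F, F.filter fun s => s ∈ J, hF, Finset.filter_subset _ _, hc, fun σ => ?_⟩
    have hne : (F.filter fun s => s ∈ J).Nonempty := by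
      rw [← Finset.card_pos]
      have : (0 : ℝ) < F.card := by exact_mod_cast hF.1.card_pos
      exact_mod_cast (mul_pos hd this).trans_le hc
    obtain ⟨x, -, hx⟩ := hJ.exists_mem hne (by rw [hco]; exact inter_subset_right)
      (extendLabel hk σ)
    exact ⟨x, hx⟩
  choose F J hF hJF hJc x hx using h'
  let y : ∀ i, (J i → Fin k) → JointSpace G U := fun i σ =>
    ⟨(x i σ, labelling (J i) (extendLabel hk σ)), fun s a ha => by
      obtain ⟨hs, rfl⟩ := labelling_eq_succ_iff.1 ha
      exact hx i σ s hs⟩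
  have hne : Nonempty (Fin k) := ⟨⟨0, hk⟩⟩
  have hpos : ∀ i, (0 : ℝ) < Fintype.card (J i → Fin k) := fun i => by
    exact_mod_cast Fintype.card_pos
  let E : Finset G × ℕ → C(JointSpace G U, ℝ) →ₗ[ℝ] ℝ := fun i =>
    { toFun := fun f => (∑ σ, f (y i σ)) / Fintype.card (J i → Fin k)
      map_add' := fun f g => by simp [Finset.sum_add_distrib, add_div]
      map_smul' := fun a f => by simp [← Finset.mul_sum, mul_div_assoc] }
  obtain ⟨ν, hν, hνT, hge⟩ := exists_invariant_measure_of_averages shift shift_mul F hF E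
    (fun i f hf => div_nonneg (Finset.sum_nonneg fun σ _ => hf _) (hpos i).le)
    (fun i => by simpa [E] using div_self (hpos i).ne')
  refine ⟨ν, hν, hνT, ?_, fun F₀ J₀ τ τ' => ?_⟩
  · have hcl := (isClopen_label (U := U) (1 : G) 0).compl
    rw [← integral_indicator_one hcl.1.measurableSet]
    refine hge (LocallyConstant.charFn ℝ hcl).toContinuousMap d fun i => ?_
    have hFpos : (0 : ℝ) < (F i).card := by exact_mod_cast (hF i).1.card_pos
    rw [le_div_iff₀ hFpos]
    refine (hJc i).trans ?_
    have hval : ∀ t ∈ J i, E i ((LocallyConstant.charFn ℝ hcl).toContinuousMap.comp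
        (shift (U := U) t : C(_, _))) = 1 := by
      intro t ht
      have : ∀ σ, (LocallyConstant.charFn ℝ hcl) (shift t (y i σ)) = 1 := by
        intro σ
        rw [LocallyConstant.coe_charFn, indicator_of_mem, Pi.one_apply]
        change labelling (J i) _ (1 * t) ≠ 0
        simp [labelling, ht]
      simpa [E, this] using div_self (hpos i).ne'
    calc ((J i).card : ℝ) = ∑ t ∈ J i, 1 := by simp
      _ = ∑ t ∈ J i, E i ((LocallyConstant.charFn ℝ hcl).toContinuousMap.comp
        (shift (U := U) t : C(_, _))) :=
          Finset.sum_congr rfl fun t ht => (hval t ht).symm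
      _ ≤ _ := Finset.sum_le_sum_of_subset_of_nonneg (hJF i) fun t _ _ =>
          div_nonneg (Finset.sum_nonneg fun σ _ => indicator_nonneg (fun _ _ => zero_le_one) _)
            (hpos i).le
  · have hc := isClopen_cylinder (U := U) F₀ J₀ τ
    have hc' := isClopen_cylinder (U := U) F₀ J₀ τ'
    rw [← sub_nonneg, ← integral_indicator_one hc.1.measurableSet,
      ← integral_indicator_one hc'.1.measurableSet]
    let f := (LocallyConstant.charFn ℝ hc).toContinuousMap
    let f' := (LocallyConstant.charFn ℝ hc').toContinuousMap
    have hint : ∀ f : C(JointSpace G U, ℝ), Integrable f ν := fun f =>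
      f.continuous.integrable_of_hasCompactSupport (HasCompactSupport.of_compactSpace f)
    have hsub := integral_sub (hint f') (hint f)
    refine le_of_le_of_eq (hge (f' - f) 0 fun i => le_of_eq ?_) hsub
    symm
    rw [div_eq_zero_iff]
    refine Or.inl (Finset.sum_eq_zero fun t _ => ?_)
    have hsum : ∑ σ, f (shift t (y i σ)) = ∑ σ, f' (shift t (y i σ)) := by
      refine Fintype.sum_equiv (Equiv.piCongrRight fun u : J i =>
        Equiv.swap (τ (u * t⁻¹)) (τ' (u * t⁻¹))) _ _ fun σ => ?_
      have hiff : shift t (y i σ) ∈ cylinder U F₀ J₀ τ ↔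
          shift t (y i (Equiv.piCongrRight (fun u : J i =>
            Equiv.swap (τ (u * t⁻¹)) (τ' (u * t⁻¹))) σ)) ∈ cylinder U F₀ J₀ τ' := by
        refine forall₂_congr fun s _ => ?_
        change labelling (J i) _ (s * t) = _ ↔ labelling (J i) _ (s * t) = _
        by_cases hst : s * t ∈ J i <;> by_cases hs : s ∈ J₀
        · simp only [labelling, hst, hs, if_true, Fin.succ_inj, extendLabel, dif_pos,
            Equiv.piCongrRight_apply, Pi.map_apply, mul_inv_cancel_right]
          rw [Equiv.swap_apply_eq_iff, Equiv.swap_apply_right]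
        · simp [labelling, hst, hs]
        · simp [labelling, hst, hs, (Fin.succ_ne_zero _).symm]
        · simp [labelling, hst, hs]
      change indicator _ 1 _ = indicator _ 1 _
      by_cases hm : shift t (y i σ) ∈ cylinder U F₀ J₀ τ
      · rw [indicator_of_mem hm, indicator_of_mem (hiff.1 hm)]
        rfl
      · rw [indicator_of_notMem hm, indicator_of_notMem (fun h => hm (hiff.2 h))]
    have : E i ((f' - f).comp (shift (U := U) t : C(_, _))) =
        (∑ σ, f' (shift t (y i σ)) - ∑ σ, f (shift t (y i σ))) /
          Fintype.card (J i → Fin k) := by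
      rw [← Finset.sum_sub_distrib]
      rfl
    rw [this, hsum, sub_self, zero_div]

end JointSpace

end JointSpace

section MeasureConstruction

/-- A weighted averaging argument: if the average size of a random subset of an `n`-element set is
at least `d * n` and the exceptional weight `b` is small, then some subset of size at least
`d / 2 * n` has positive weight and relatively small exceptional weight. -/
lemma exists_large_of_sum_weights {G : Type*} {P : Finset (Finset G)} {w b : Finset G → ℝ}
    {d η : ℝ} {n : ℕ} (hn : 0 < n) (hd : 0 < d) (hη : 0 < η) (hP : ∀ J ∈ P, J.card ≤ n)
    (hb : ∀ J, 0 ≤ b J) (hw : ∀ J, 0 ≤ w J) (hw1 : ∑ J ∈ P, w J = 1)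
    (hbd : ∑ J ∈ P, b J ≤ η * d / 4) (hdn : d * n ≤ ∑ J ∈ P, J.card * w J) :
    ∃ J ∈ P, 0 < w J ∧ d / 2 * n ≤ J.card ∧ b J < η * w J := by
  have hn' : (0 : ℝ) < n := by exact_mod_cast hn
  have hlt : ∑ J ∈ P, (d / 2 * n * w J + n / η * b J) < ∑ J ∈ P, J.card * w J := by
    rw [Finset.sum_add_distrib, ← Finset.mul_sum, ← Finset.mul_sum, hw1]
    have h1 : n / η * ∑ J ∈ P, b J ≤ n / η * (η * d / 4) := by gcongr
    have h2 : n / η * (η * d / 4) = d * n / 4 := by field_simp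
    nlinarith [mul_pos hd hn']
  obtain ⟨J, hJ, hJlt⟩ := Finset.exists_lt_of_sum_lt hlt
  have hbJ : 0 ≤ n / η * b J := mul_nonneg (by positivity) (hb J)
  have hwJ : 0 < w J := by
    refine (hw J).lt_of_ne fun h0 => ?_
    rw [← h0] at hJlt
    linarith
  refine ⟨J, hJ, hwJ, ?_, ?_⟩
  · exact le_of_mul_le_mul_right (by linarith) hwJ
  · have hJn : (J.card : ℝ) * w J ≤ n * w J := by
      gcongr
      exact_mod_cast hP J hJ
    have hpos : 0 ≤ d / 2 * n * w J := by positivity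
    have h1 : n / η * b J < n * w J := by linarith
    have h2 : n / η * b J = n * (b J / η) := by ring
    rw [h2] at h1
    have h3 := lt_of_mul_lt_mul_left h1 hn'.le
    rwa [div_lt_iff₀ hη, mul_comm] at h3

variable {G X : Type*} [Group G] [MulAction G X] {k : ℕ} {U : Fin k → Set X}

namespace JointSpace

/-- The set of labelled elements of `F`. -/
noncomputable def support (F : Finset G) (y : JointSpace G U) : Finset G :=
  F.filter fun s => y.1.2 s ≠ 0

lemma cylinder_subset_preimage_support {F J : Finset G} (hJ : J ⊆ F) (τ : G → Fin k) :
    cylinder U F J τ ⊆ support F ⁻¹' {J} := by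
  intro y hy
  ext s
  have := hy s
  by_cases hs : s ∈ J
  · simp [support, this (hJ hs), labelling, hs, hJ hs]
  · by_cases hF : s ∈ F <;> simp [support, hF, hs]
    simp [this hF, labelling, hs]

lemma preimage_support_subset (hk : 1 ≤ k) (F J : Finset G) :
    support F ⁻¹' {J} ⊆ ⋃ τ : J → Fin k, cylinder U F J (extendLabel hk τ) := by
  rintro y rfl
  refine mem_iUnion.2 ⟨fun s => (y.1.2 s).pred (Finset.mem_filter.1 s.2).2, fun s hs => ?_⟩
  by_cases h0 : y.1.2 s = 0 <;> simp [labelling, support, extendLabel, hs, h0]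

lemma disjoint_cylinder (hk : 1 ≤ k) {F J : Finset G} (hJ : J ⊆ F) {τ τ' : J → Fin k}
    (h : τ ≠ τ') :
    Disjoint (cylinder U F J (extendLabel hk τ)) (cylinder U F J (extendLabel hk τ')) := by
  refine Set.disjoint_left.2 fun y hy hy' => h (funext fun s => ?_)
  have := (hy s (hJ s.2)).symm.trans (hy' s (hJ s.2))
  simpa [labelling, extendLabel] using this

variable [TopologicalSpace X]

lemma measurableSet_preimage_support (F J : Finset G) :
    MeasurableSet (support F ⁻¹' {J} : Set (JointSpace G U)) := by
  by_cases hJ : J ⊆ F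
  · have : (support F ⁻¹' {J} : Set (JointSpace G U)) =
        ⋂ s ∈ F, {y : JointSpace G U | y.1.2 s ≠ 0 ↔ s ∈ J} := by
      ext y
      simp only [support, mem_preimage, mem_singleton_iff, Finset.ext_iff, Finset.mem_filter,
        mem_iInter, mem_ofPred_eq]
      exact forall_congr' fun s =>
        ⟨fun h hs => by rw [← h]; simp [hs], fun h => ⟨fun hs => (h hs.1).1 hs.2,
          fun hs => ⟨hJ hs, (h (hJ hs)).2 hs⟩⟩⟩
    rw [this]
    refine Finset.measurableSet_biInter _ fun s _ => ?_
    have hm := (isClopen_label (U := U) s 0).1.measurableSet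
    by_cases hs : s ∈ J
    · simp only [hs, iff_true]
      exact hm.compl
    · simpa [hs] using hm
  · convert MeasurableSet.empty
    refine eq_empty_of_forall_notMem fun y hy => hJ ?_
    rw [← show support F y = J from hy]
    exact Finset.filter_subset _ _

lemma sum_measureReal_preimage_support_inter (ν : Measure (JointSpace G U)) [IsFiniteMeasure ν]
    (F : Finset G) (B : Set (JointSpace G U)) :
    ∑ J ∈ F.powerset, ν.real (support F ⁻¹' {J} ∩ B) = ν.real B := by
  have h := sum_measureReal_preimage_singleton (μ := ν.restrict B) F.powerset
    (f := support F) fun J _ => measurableSet_preimage_support F J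
  have huniv : (support F ⁻¹' (F.powerset : Set (Finset G)) : Set (JointSpace G U)) = univ :=
    eq_univ_of_forall fun y => Finset.mem_coe.2 (Finset.mem_powerset.2 (Finset.filter_subset _ _))
  rw [huniv, measureReal_restrict_apply_univ] at h
  rw [← h]
  exact Finset.sum_congr rfl fun J _ =>
    (measureReal_restrict_apply (measurableSet_preimage_support F J)).symm

lemma sum_card_mul_measureReal (ν : Measure (JointSpace G U)) [IsFiniteMeasure ν] (F : Finset G) :
    ∑ J ∈ F.powerset, J.card * ν.real (support F ⁻¹' {J}) =
      ∑ s ∈ F, ν.real {y | y.1.2 s ≠ 0} := by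
  simp_rw [← sum_measureReal_preimage_support_inter ν F {y | y.1.2 _ ≠ 0}]
  rw [Finset.sum_comm]
  refine Finset.sum_congr rfl fun J hJ => ?_
  have hJF := Finset.mem_powerset.1 hJ
  rw [← nsmul_eq_mul, ← Finset.sum_const]
  refine Finset.sum_subset_zero_on_sdiff hJF (fun s hs => ?_) fun s hs => ?_
  · have : (support F ⁻¹' {J} ∩ {y | y.1.2 s ≠ 0} : Set (JointSpace G U)) = ∅ := by
      refine eq_empty_of_forall_notMem fun y hy => (Finset.mem_sdiff.1 hs).2 ?_
      rw [← show support F y = J from hy.1]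
      exact Finset.mem_filter.2 ⟨(Finset.mem_sdiff.1 hs).1, hy.2⟩
    rw [this, measureReal_empty]
  · congr 1
    refine (inter_eq_left.2 fun y hy => ?_).symm
    rw [← show support F y = J from hy] at hs
    exact (Finset.mem_filter.1 hs).2

lemma measureReal_label_ne_zero [ContinuousConstSMul G X] {ν : Measure (JointSpace G U)} {g : G}
    (h : ν.map (shift g) = ν) : ν.real {y | y.1.2 g ≠ 0} = ν.real {y | y.1.2 1 = 0}ᶜ := by
  conv_rhs => rw [← h]
  rw [map_measureReal_apply (shift g).continuous.measurable
    (isClopen_label (U := U) (1 : G) 0).1.measurableSet.compl]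
  congr 1
  ext y
  change _ ↔ y.1.2 (1 * g) ≠ 0
  rw [one_mul]
  rfl

/-- If all labellings of `J` are equally likely and the exceptional part of the event that `J` is
the set of labelled elements is relatively small, then most labellings of `J` are realized by
points of `D`. -/
lemma card_realized_labellings_ge {ν : Measure (JointSpace G U)} [IsFiniteMeasure ν] (hk : 1 ≤ k)
    {F J : Finset G} (hJ : J ⊆ F) (hunif : ∀ τ τ' : G → Fin k,
      ν.real (cylinder U F J τ) ≤ ν.real (cylinder U F J τ')) {D : Set X} {η : ℝ} (hη : 0 < η)
    (hb : ν.real (support F ⁻¹' {J} ∩ {y | y.1.1 ∈ D}ᶜ) < η * ν.real (support F ⁻¹' {J})) :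
    (1 - η) * (k : ℝ) ^ J.card ≤
      (Finset.univ.filter fun τ : J → Fin k => ∃ x ∈ D, ∀ s : J, (s : G) • x ∈ U (τ s)).card := by
  let m := ν.real (cylinder U F J fun _ => ⟨0, hk⟩)
  have hm : ∀ τ, ν.real (cylinder U F J τ) = m := fun τ => le_antisymm (hunif _ _) (hunif _ _)
  let bad := Finset.univ.filter fun τ : J → Fin k => ¬ ∃ x ∈ D, ∀ s : J, (s : G) • x ∈ U (τ s)
  have hw : ν.real (support F ⁻¹' {J} : Set (JointSpace G U)) ≤ (k : ℝ) ^ J.card * m := by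
    refine (measureReal_mono (preimage_support_subset hk F J)).trans
      ((measureReal_iUnion_fintype_le _).trans_eq ?_)
    simp [hm]
  have hbad : bad.card * m ≤ ν.real (support F ⁻¹' {J} ∩ {y : JointSpace G U | y.1.1 ∈ D}ᶜ) := by
    have hsum := measureReal_biUnion_finset (μ := ν) (s := bad)
      (f := fun τ => cylinder U F J (extendLabel hk τ))
      (fun τ _ τ' _ h => disjoint_cylinder hk hJ h)
      fun τ _ => (isClopen_cylinder F J _).1.measurableSet
    simp only [hm, Finset.sum_const, nsmul_eq_mul] at hsum
    rw [← hsum]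
    refine measureReal_mono (iUnion₂_subset fun τ hτ => subset_inter
      (cylinder_subset_preimage_support hJ _) fun y hy hyD => ?_)
    refine (Finset.mem_filter.1 hτ).2 ⟨y.1.1, hyD, fun s => y.2 s (τ s) ?_⟩
    rw [hy s (hJ s.2), labelling_eq_succ_iff]
    exact ⟨s.2, extendLabel_coe hk τ s⟩
  have hlt : bad.card * m < η * (k : ℝ) ^ J.card * m := by
    refine hbad.trans_lt (hb.trans_le ?_)
    rw [mul_assoc]
    gcongr
  have hlt' : (bad.card : ℝ) < η * (k : ℝ) ^ J.card :=
    lt_of_mul_lt_mul_right hlt measureReal_nonneg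
  have hcard : ((Finset.univ.filter fun τ : J → Fin k =>
      ∃ x ∈ D, ∀ s : J, (s : G) • x ∈ U (τ s)).card : ℝ) + bad.card = (k : ℝ) ^ J.card := by
    have := Finset.card_filter_add_card_filter_not (s := (Finset.univ : Finset (J → Fin k)))
      fun τ : J → Fin k => ∃ x ∈ D, ∀ s : J, (s : G) • x ∈ U (τ s)
    rw [Finset.card_univ, Fintype.card_fun, Fintype.card_fin, Fintype.card_coe] at this
    exact_mod_cast this
  linarith

end JointSpace

open JointSpace in
/-- A tuple of closed sets with positive independence density has positive independence density
with respect to some invariant measure. -/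
lemma exists_invariantMeasure_hasPosIndepDens [TopologicalSpace X] [CompactSpace X] [T2Space X]
    [ContinuousConstSMul G X] [MeasurableSpace X] [BorelSpace X] (hamen : FolnerAmenable G)
    (hk : 1 ≤ k) (hU : ∀ i, IsClosed (U i)) {d : ℝ} (hd : 0 < d)
    (h : ∀ (K : Finset G) (δ : ℝ), 0 < δ → ∃ (F : Finset G) (J : Set G),
      FolnerInv K δ F ∧ IndepSet U univ J ∧ d * F.card ≤ ((F : Set G) ∩ J).ncard) :
    ∃ μ : Measure X, IsProbabilityMeasure μ ∧ InvariantMeasure G μ ∧ HasPosIndepDens G μ U := by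
  obtain ⟨ν, hν, hinv, hlab, hunif⟩ := JointSpace.exists_measure hk hU hd h
  have hpt : Measurable fun y : JointSpace G U => y.1.1 := continuous_point.measurable
  obtain ⟨c, hc, hshat⟩ := exists_shatters hk (θ := (k : ℝ) - 1 / 2) (by linarith)
  have hk' : (1 : ℝ) ≤ k := by exact_mod_cast hk
  have hη : (0 : ℝ) < 1 / (2 * k) := by positivity
  refine ⟨ν.map fun y => y.1.1, Measure.isProbabilityMeasure_map hpt.aemeasurable,
    fun s B hB => ?_, 1 / (2 * k) * d / 4, by positivity, c * (d / 2), by positivity,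
    fun K ε hε => ?_⟩
  · rw [Measure.map_apply hpt hB,
      Measure.map_apply hpt (hB.preimage (continuous_const_smul s).measurable)]
    conv_rhs => rw [← hinv s]
    rw [Measure.map_apply (shift s).continuous.measurable (hpt hB)]
    rfl
  · obtain ⟨F, hF⟩ := hamen K ε hε
    refine ⟨F, hF, fun D hD hμD => ?_⟩
    have hD' : MeasurableSet {y : JointSpace G U | y.1.1 ∈ D} := hpt hD
    rw [Measure.map_apply hpt hD] at hμD
    have hDc : ν.real {y | y.1.1 ∈ D}ᶜ ≤ 1 / (2 * k) * d / 4 := by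
      rw [probReal_compl_eq_one_sub hD']
      have : 1 - 1 / (2 * k) * d / 4 ≤ ν.real {y : JointSpace G U | y.1.1 ∈ D} := hμD
      linarith
    obtain ⟨J, hJF, hwpos, hJc, hbJ⟩ := exists_large_of_sum_weights (P := F.powerset)
      (w := fun J => ν.real (support F ⁻¹' {J}))
      (b := fun J => ν.real (support F ⁻¹' {J} ∩ {y | y.1.1 ∈ D}ᶜ)) hF.1.card_pos hd hη
      (fun J hJ => Finset.card_le_card (Finset.mem_powerset.1 hJ)) (fun _ => measureReal_nonneg)
      (fun _ => measureReal_nonneg)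
      (by simpa using sum_measureReal_preimage_support_inter ν F univ)
      (by rwa [sum_measureReal_preimage_support_inter]) (by
        rw [sum_card_mul_measureReal, mul_comm, ← nsmul_eq_mul]
        refine Finset.card_nsmul_le_sum _ _ _ fun s _ => ?_
        rwa [measureReal_label_ne_zero (hinv s)])
    have hJF := Finset.mem_powerset.1 hJF
    have hcard := card_realized_labellings_ge hk hJF (hunif F J) hη hbJ
    have hFpos : (0 : ℝ) < F.card := by exact_mod_cast hF.1.card_pos
    have hJpos : J.card ≠ 0 := by
      have : (0 : ℝ) < J.card := lt_of_lt_of_le (by positivity) hJc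
      exact_mod_cast this.ne'
    have hη1 : (1 : ℝ) / (2 * k) ≤ 1 := by
      rw [div_le_one (by positivity)]
      linarith
    obtain ⟨I, hIJ, hIc, hI⟩ := hshat J _ (by
      refine le_trans ?_ hcard
      have : (k : ℝ) - 1 / 2 = (1 - 1 / (2 * k)) * k := by field_simp
      rw [this, mul_pow]
      gcongr
      exact pow_le_of_le_one (by linarith) (by linarith) hJpos)
    refine ⟨I, hIJ.trans hJF, IndepSet.of_forall_exists fun σ => ?_, ?_⟩
    · obtain ⟨τ, hτ, hτI⟩ := hI σ
      obtain ⟨x, hxD, hx⟩ := (Finset.mem_filter.1 hτ).2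
      exact ⟨x, hxD, fun s hs => hτI s (hIJ hs) hs ▸ hx ⟨s, hIJ hs⟩⟩
    · calc c * (d / 2) * F.card = c * (d / 2 * F.card) := by ring
        _ ≤ c * J.card := by gcongr
        _ ≤ I.card := hIc

end MeasureConstruction

/-- Theorem: the set of IE-tuples of length `k` equals the closure of the union of the
sets of `μ`-IE-tuples over all `G`-invariant Borel probability measures `μ`. -/
theorem stmt9 {G X : Type*} [Group G] [TopologicalSpace X] [CompactSpace X] [T2Space X]
    [MulAction G X] [ContinuousConstSMul G X] [MeasurableSpace X] [BorelSpace X]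
    (hamen : FolnerAmenable G) (k : ℕ) (hk : 1 ≤ k) :
    {x : Fin k → X | IsIETuple G x} =
      closure (⋃ μ : {μ : Measure X // IsProbabilityMeasure μ ∧ InvariantMeasure G μ},
        {x : Fin k → X | IsMuIETuple G μ.1 x}) := by
  ext x
  refine ⟨fun hx => mem_closure_iff_nhds.2 fun W hW => ?_, fun hx U hU => ?_⟩
  · rw [nhds_pi, Filter.mem_pi'] at hW
    obtain ⟨I, V, hV, hVW⟩ := hW
    choose U hU hUc hUV using fun i => exists_mem_nhds_isClosed_subset (hV i)
    obtain ⟨d, hd, h⟩ := hx U hU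
    obtain ⟨μ, hμ, hinv, hpos⟩ := exists_invariantMeasure_hasPosIndepDens hamen hk hUc hd h
    obtain ⟨z, hz, hzpos⟩ := exists_mem_forall_hasPosIndepDens hk (fun i => (hUc i).isCompact) hpos
    exact ⟨z, hVW fun i _ => hUV i (hz i), mem_iUnion.2 ⟨⟨μ, hμ, hinv⟩, fun V hV =>
      (upperIndepDens_pos_iff hamen μ V).2 (hzpos V hV)⟩⟩
  · obtain ⟨z, hzU, hz⟩ := mem_closure_iff_nhds.1 hx (univ.pi fun i => interior (U i))
      (set_pi_mem_nhds finite_univ fun i _ => interior_mem_nhds.2 (hU i))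
    obtain ⟨⟨μ, hμ, hinv⟩, hzμ⟩ := mem_iUnion.1 hz
    obtain ⟨δ, hδ, c, hc, h⟩ := (upperIndepDens_pos_iff hamen μ U).1
      (hzμ U fun i => mem_interior_iff_mem_nhds.1 (hzU i (mem_univ i)))
    refine ⟨c, hc, fun K ε hε => ?_⟩
    obtain ⟨F, hF, hFD⟩ := h K ε hε
    obtain ⟨I, hIF, hI, hIc⟩ := hFD univ MeasurableSet.univ (by simpa using hδ.le)
    refine ⟨F, I, hF, hI, ?_⟩
    rwa [inter_eq_right.2 (Finset.coe_subset.2 hIF), ncard_coe_finset]
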